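/- arXiv:1406.0080 — 6 statements merged into one kernel-verified Lean document; each statement's English description precedes it below -/
import Mathlib

section
/- Let F be a field, let A be an n×m matrix over F, let v_1,…,v_r ∈ F^n and w_1,…,w_r ∈ F^m, and let B = Σ_{i=1}^r v_i w_iᵀ. Then the minimum of rank J(x,y,z) over all x ∈ F^r, y ∈ F^{r(r−1)}, z ∈ F^{r(r−1)/2} equals the minimum of rank(A + x·B) over all x ∈ F. -/
/-- The matrix `J(x,y,z)` from the reduction of Rank Minimization to Special Rank
Minimization.  Its rows are indexed by `Fin n` together with the pairs `(i,j)`, `i < j`,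
and its columns by `Fin m` together with two columns for each pair `(i,j)`, `i < j`.
The top-left block is `E(x) = A + ∑_i x_i v_i w_iᵀ`; above the diagonal block row the
pair `(i,j)` contributes the `n × 2` block
`C_{i,j}(x,y) = ( (y_{i,j} - x_i) v_i , (y_{j,i} - x_j) v_j )`, and below it, placed
block-diagonally, the `1 × 2` block
`D_{i,j}(y,z) = ( y_{i,j} - z_{i,j} , y_{j,i} - z_{i,j} )`; all other entries are `0`. -/
def Jmat (F : Type*) [Field F] (n m r : ℕ)
    (A : Matrix (Fin n) (Fin m) F) (v : Fin r → Fin n → F) (w : Fin r → Fin m → F)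
    (x : Fin r → F) (y : Fin r → Fin r → F)
    (z : {p : Fin r × Fin r // p.1 < p.2} → F) :
    Matrix (Fin n ⊕ {p : Fin r × Fin r // p.1 < p.2})
           (Fin m ⊕ ({p : Fin r × Fin r // p.1 < p.2} × Fin 2)) F :=
  Matrix.fromBlocks
    (A + ∑ t : Fin r, x t • Matrix.vecMulVec (v t) (w t))
    (Matrix.of fun i pc =>
      if pc.2 = 0 then (y pc.1.1.1 pc.1.1.2 - x pc.1.1.1) * v pc.1.1.1 i
      else (y pc.1.1.2 pc.1.1.1 - x pc.1.1.2) * v pc.1.1.2 i)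
    0
    (Matrix.of fun q pc =>
      if q = pc.1 then
        (if pc.2 = 0 then y pc.1.1.1 pc.1.1.2 - z pc.1 else y pc.1.1.2 pc.1.1.1 - z pc.1)
      else 0)


abbrev PairIdx (r : ℕ) := {p : Fin r × Fin r // p.1 < p.2}

lemma Jmat_const_rank_le (F : Type*) [Field F] (n m r : ℕ)
    (A : Matrix (Fin n) (Fin m) F) (v : Fin r → Fin n → F) (w : Fin r → Fin m → F) (t : F) :
    (Jmat F n m r A v w (fun _ => t) (fun _ _ => t) (fun _ => t)).rank ≤
      (A + t • ∑ i : Fin r, Matrix.vecMulVec (v i) (w i)).rank := by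
  have h : Jmat F n m r A v w (fun _ => t) (fun _ _ => t) (fun _ => t) =
      (Matrix.fromRows 1 0 : Matrix (Fin n ⊕ PairIdx r) (Fin n) F) *
      ((A + t • ∑ i : Fin r, Matrix.vecMulVec (v i) (w i)) *
      (Matrix.fromCols 1 0 : Matrix (Fin m) (Fin m ⊕ (PairIdx r × Fin 2)) F)) := by
    rw [Matrix.mul_fromCols, Matrix.fromRows_mul_fromCols]
    ext (i | i) (j | j) <;> simp [Jmat, Finset.smul_sum]
  rw [h]
  exact (Matrix.rank_mul_le_right _ _).trans (Matrix.rank_mul_le_left _ _)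

def topIncl (F : Type*) [Field F] (α β : Type*) : (α → F) →ₗ[F] (α ⊕ β → F) where
  toFun a := Sum.elim a 0
  map_add' a b := by ext (i | i) <;> simp
  map_smul' a b := by ext (i | i) <;> simp

lemma finrank_split (F : Type*) [Field F] {α β : Type*} [Fintype α] [Fintype β] [DecidableEq β]
    (W : Submodule F (α ⊕ β → F)) {ι : Type*} [Fintype ι] (g : ι → β)
    (hg : Function.Injective g)
    (h : ∀ i, Pi.single (g i) (1 : F) ∈ W.map (LinearMap.funLeft F F (Sum.inr : β → α ⊕ β))) :
    Module.finrank F (W.comap (topIncl F α β)) + Fintype.card ι ≤ Module.finrank F W := by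
  set π := (LinearMap.funLeft F F (Sum.inr : β → α ⊕ β)).domRestrict W with hπ
  have h1 := LinearMap.finrank_range_add_finrank_ker π
  have h2 : Fintype.card ι ≤ Module.finrank F (LinearMap.range π) := by
    have li : LinearIndependent F (fun i => (Pi.single (g i) (1 : F) : β → F)) :=
      (Pi.linearIndependent_single_one β F).comp g hg
    have hr : LinearMap.range π = W.map (LinearMap.funLeft F F (Sum.inr : β → α ⊕ β)) := by
      rw [hπ, LinearMap.range_domRestrict]
    rw [hr, ← finrank_span_eq_card li]
    apply Submodule.finrank_mono
    rw [Submodule.span_le]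
    rintro _ ⟨i, rfl⟩
    exact h i
  have h3 : Module.finrank F (W.comap (topIncl F α β)) ≤ Module.finrank F (LinearMap.ker π) := by
    let f : (W.comap (topIncl F α β)) →ₗ[F] LinearMap.ker π :=
      LinearMap.codRestrict _ (LinearMap.codRestrict W
        ((topIncl F α β).domRestrict _) (fun c => c.2)) (fun c => by
          rw [LinearMap.mem_ker]
          ext b
          rfl)
    apply LinearMap.finrank_le_finrank_of_injective (f := f)
    intro a b hab
    have := congrArg (fun c : LinearMap.ker π => ((c : W) : α ⊕ β → F)) hab
    ext i
    exact congrFun this (Sum.inl i)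
  omega

lemma exists_rank_le (F : Type*) [Field F] (n m r : ℕ)
    (A : Matrix (Fin n) (Fin m) F) (v : Fin r → Fin n → F) (w : Fin r → Fin m → F)
    (x : Fin r → F) (y : Fin r → Fin r → F) (z : PairIdx r → F) :
    ∃ t : F, (A + t • ∑ i : Fin r, Matrix.vecMulVec (v i) (w i)).rank ≤
      (Jmat F n m r A v w x y z).rank := by
  classical
  set J := Jmat F n m r A v w x y z with hJ
  set W := LinearMap.range J.mulVecLin with hW
  set V := W.comap (topIncl F (Fin n) (PairIdx r)) with hV
  -- top-left columns
  have hE : ∀ c, (A + ∑ t : Fin r, x t • Matrix.vecMulVec (v t) (w t)).mulVec c ∈ V := by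
    intro c
    refine ⟨Sum.elim c 0, ?_⟩
    rw [Matrix.mulVecLin_apply, hJ, Jmat, Matrix.fromBlocks_mulVec]
    ext (i | i) <;> simp [topIncl]
  have hcol : ∀ p, J.col p ∈ W := fun p => by
    refine ⟨Pi.single p 1, ?_⟩
    simp
  -- pairs
  have hpair : ∀ p : PairIdx r, v p.1.1 ∉ V → v p.1.2 ∉ V → x p.1.1 ≠ x p.1.2 →
      Pi.single p (1 : F) ∈ W.map (LinearMap.funLeft F F (Sum.inr : PairIdx r → Fin n ⊕ PairIdx r)) := by
    intro p h1 h2 hx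
    have hc0 : (LinearMap.funLeft F F (Sum.inr : PairIdx r → Fin n ⊕ PairIdx r)) (J.col (Sum.inr (p, 0)))
        = (y p.1.1 p.1.2 - z p) • Pi.single p (1 : F) := by
      ext q
      by_cases hq : q = p <;>
        simp [LinearMap.funLeft, hJ, Jmat, Matrix.col, hq]
    have hc1 : (LinearMap.funLeft F F (Sum.inr : PairIdx r → Fin n ⊕ PairIdx r)) (J.col (Sum.inr (p, 1)))
        = (y p.1.2 p.1.1 - z p) • Pi.single p (1 : F) := by
      ext q
      by_cases hq : q = p <;>
        simp [LinearMap.funLeft, hJ, Jmat, Matrix.col, hq]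
    by_cases d0 : y p.1.1 p.1.2 - z p = 0
    · by_cases d1 : y p.1.2 p.1.1 - z p = 0
      · exfalso
        have e0 : y p.1.1 p.1.2 - x p.1.1 = 0 := by
          by_contra hne
          apply h1
          rw [← Submodule.smul_mem_iff _ hne]
          have hh := hcol (Sum.inr (p, 0))
          have : topIncl F (Fin n) (PairIdx r) ((y p.1.1 p.1.2 - x p.1.1) • v p.1.1) =
              J.col (Sum.inr (p, 0)) := by
            ext (i | q)
            · simp [topIncl, hJ, Jmat, Matrix.col]
            · have := congrFun hc0 q
              rw [d0, zero_smul] at this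
              exact this.symm
          rw [← this] at hh
          exact hh
        have e1 : y p.1.2 p.1.1 - x p.1.2 = 0 := by
          by_contra hne
          apply h2
          rw [← Submodule.smul_mem_iff _ hne]
          have hh := hcol (Sum.inr (p, 1))
          have : topIncl F (Fin n) (PairIdx r) ((y p.1.2 p.1.1 - x p.1.2) • v p.1.2) =
              J.col (Sum.inr (p, 1)) := by
            ext (i | q)
            · simp [topIncl, hJ, Jmat, Matrix.col]
            · have := congrFun hc1 q
              rw [d1, zero_smul] at this
              exact this.symm
          rw [← this] at hh
          exact hh
        apply hx
        linear_combination d0 - d1 - e0 + e1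
      · rw [← Submodule.smul_mem_iff _ d1, ← hc1]
        exact Submodule.mem_map_of_mem (hcol _)
    · rw [← Submodule.smul_mem_iff _ d0, ← hc0]
      exact Submodule.mem_map_of_mem (hcol _)
  -- main bound
  have key : ∀ t : F, ∀ g : {i : Fin r // v i ∉ V ∧ x i ≠ t} → PairIdx r, Function.Injective g →
      (∀ i, Pi.single (g i) (1 : F) ∈
        W.map (LinearMap.funLeft F F (Sum.inr : PairIdx r → Fin n ⊕ PairIdx r))) →
      (A + t • ∑ i : Fin r, Matrix.vecMulVec (v i) (w i)).rank ≤ J.rank := by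
    intro t g hg h
    have h1 : Module.finrank F V + Fintype.card {i : Fin r // v i ∉ V ∧ x i ≠ t} ≤
        Module.finrank F W := finrank_split F W g hg h
    let S := Submodule.span F (Set.range fun i : {i : Fin r // v i ∉ V ∧ x i ≠ t} => v i)
    have h2 : Module.finrank F S ≤ Fintype.card {i : Fin r // v i ∉ V ∧ x i ≠ t} :=
      finrank_range_le_card _
    have h3 : LinearMap.range (A + t • ∑ i : Fin r, Matrix.vecMulVec (v i) (w i)).mulVecLin
        ≤ V ⊔ S := by
      rintro _ ⟨c, rfl⟩
      have : (A + t • ∑ i : Fin r, Matrix.vecMulVec (v i) (w i)).mulVecLin c =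
          (A + ∑ t : Fin r, x t • Matrix.vecMulVec (v t) (w t)).mulVec c +
          ∑ i, ((t - x i) * (w i ⬝ᵥ c)) • v i := by
        rw [Matrix.mulVecLin_apply]
        have : A + t • ∑ i : Fin r, Matrix.vecMulVec (v i) (w i) =
            (A + ∑ t : Fin r, x t • Matrix.vecMulVec (v t) (w t)) +
            ∑ i, (t - x i) • Matrix.vecMulVec (v i) (w i) := by
          simp only [sub_smul, Finset.sum_sub_distrib, Finset.smul_sum]
          abel
        rw [this, Matrix.add_mulVec _ (∑ i, (t - x i) • Matrix.vecMulVec (v i) (w i)),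
          Matrix.sum_mulVec]
        congr 1
        refine Finset.sum_congr rfl fun i _ => ?_
        rw [Matrix.smul_mulVec, Matrix.vecMulVec_mulVec, mul_smul]
        simp
      rw [this]
      refine add_mem (Submodule.mem_sup_left (hE c)) (sum_mem fun i _ => ?_)
      by_cases hi : x i = t
      · simp [hi]
      · apply Submodule.smul_mem
        by_cases hv : v i ∈ V
        · exact Submodule.mem_sup_left hv
        · exact Submodule.mem_sup_right (Submodule.subset_span ⟨⟨i, hv, hi⟩, rfl⟩)
    have h4 := Submodule.finrank_mono h3
    have h5 := Submodule.finrank_add_le_finrank_add_finrank V S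
    have h6 : J.rank = Module.finrank F W := rfl
    rw [h6, Matrix.rank]
    omega
  by_cases hU : ∃ u, v u ∉ V
  · obtain ⟨u, hu⟩ := hU
    refine ⟨x u, key (x u) (fun i => if h : u < i.1 then ⟨(u, i.1), h⟩ else
      ⟨(i.1, u), lt_of_le_of_ne (not_lt.1 h) (fun e => i.2.2 (congrArg x e))⟩) ?_ ?_⟩
    · rintro ⟨i, hi⟩ ⟨j, hj⟩ hij
      ext1
      by_cases h1 : u < i <;> by_cases h2 : u < j <;> simp [h1, h2] at hij <;> grind
    · rintro ⟨i, hi, hxi⟩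
      by_cases h1 : u < i
      · simp only [h1, dif_pos]
        exact hpair _ hu hi (Ne.symm hxi)
      · simp only [h1, dif_neg, not_false_eq_true]
        exact hpair _ hi hu hxi
  · push Not at hU
    exact ⟨0, key 0 (fun i => absurd (hU i.1) i.2.1) (fun i => absurd (hU i.1) i.2.1)
      (fun i => absurd (hU i.1) i.2.1)⟩

/-- The minimum of `rank J(x,y,z)` over all parameters `x ∈ F^r`,
`y ∈ F^{r(r-1)}` and `z ∈ F^{r(r-1)/2}` equals the minimum of `rank (A + x • B)` over all
`x ∈ F`, where `B = ∑_{i=1}^r v_i w_iᵀ`. -/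
theorem sInf_rank_Jmat_eq_sInf_rank
    (F : Type*) [Field F] (n m r : ℕ)
    (A : Matrix (Fin n) (Fin m) F) (v : Fin r → Fin n → F) (w : Fin r → Fin m → F) :
    sInf {d : ℕ | ∃ (x : Fin r → F) (y : Fin r → Fin r → F)
        (z : {p : Fin r × Fin r // p.1 < p.2} → F),
        (Jmat F n m r A v w x y z).rank = d}
      = sInf {d : ℕ | ∃ t : F,
          (A + t • ∑ i : Fin r, Matrix.vecMulVec (v i) (w i)).rank = d} := by
  apply le_antisymm
  · obtain ⟨t, ht⟩ := Nat.sInf_mem (s := {d : ℕ | ∃ t : F,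
          (A + t • ∑ i : Fin r, Matrix.vecMulVec (v i) (w i)).rank = d}) ⟨_, 0, rfl⟩
    rw [← ht]
    refine le_trans (Nat.sInf_le ?_) (Jmat_const_rank_le F n m r A v w t)
    exact ⟨_, _, _, rfl⟩
  · obtain ⟨x, y, z, h⟩ := Nat.sInf_mem (s := {d : ℕ | ∃ (x : Fin r → F) (y : Fin r → Fin r → F)
        (z : {p : Fin r × Fin r // p.1 < p.2} → F),
        (Jmat F n m r A v w x y z).rank = d}) ⟨_, 0, 0, 0, rfl⟩
    rw [← h]
    obtain ⟨t, ht⟩ := exists_rank_le F n m r A v w x y z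
    refine le_trans (Nat.sInf_le ?_) ht
    exact ⟨t, rfl⟩
end

section
/- Let F be a field, let A be an n×m matrix over F, let v ∈ F^n, w ∈ F^m and x ∈ F. Let M(x) be the (n+2)×(m+2) matrix given in block form by: first n rows ( A | 0 | v ) (column m+1 equal to zero, column m+2 equal to v), row n+1 equal to ( wᵀ | −1 | 0 ), and row n+2 equal to ( 0 | x | −1 ) (its only nonzero entries being x in column m+1 and −1 in column m+2). Then rank(A + x·v wᵀ) + 2 = rank M(x). In particular, M(x) differs from a fixed matrix only in the single entry at position (n+2, m+1), so minimizing rank(A + x·v wᵀ) over x ∈ F is a low rank matrix completion problem with one missing entry. -/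
/-- The `(n+2) × (m+2)` matrix `M(x) = ( A , 0 , v ; wᵀ , -1 , 0 ; 0 , x , -1 )`:
top-left block `A`; the two extra columns of the first `n` rows are `0` and `v`;
row `n+1` is `( wᵀ , -1 , 0 )`; row `n+2` is `( 0 , x , -1 )`. -/
def completionMatrix (F : Type*) [Field F] (n m : ℕ) (A : Matrix (Fin n) (Fin m) F)
    (v : Fin n → F) (w : Fin m → F) (x : F) :
    Matrix (Fin n ⊕ Fin 2) (Fin m ⊕ Fin 2) F :=
  Matrix.fromBlocks A
    (Matrix.of fun i c => if c = 0 then 0 else v i)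
    (Matrix.of fun c j => if c = 0 then w j else 0)
    (Matrix.of fun c c' =>
      if c = 0 then (if c' = 0 then -1 else 0) else (if c' = 0 then x else -1))

open Matrix

/-- `rank (A + x • v wᵀ) + 2 = rank M(x)`, and moreover `M(x)` differs from `M(x')`
only in the single entry at position `(n+2, m+1)`, so minimizing `rank (A + x • v wᵀ)` over
`x ∈ F` is a low rank matrix completion problem with one missing entry. -/
theorem rank_add_smul_vecMulVec_add_two_eq_rank_completionMatrix
    (F : Type*) [Field F] (n m : ℕ) (A : Matrix (Fin n) (Fin m) F)
    (v : Fin n → F) (w : Fin m → F) (x : F) :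
    (A + x • Matrix.vecMulVec v w).rank + 2 = (completionMatrix F n m A v w x).rank ∧
      ∀ (x' : F) (i : Fin n ⊕ Fin 2) (j : Fin m ⊕ Fin 2),
        ¬(i = Sum.inr 1 ∧ j = Sum.inr 0) →
          completionMatrix F n m A v w x i j = completionMatrix F n m A v w x' i j := by
  refine ⟨?_, ?_⟩
  · let φ : (Fin m → F) →ₗ[F] (Fin m ⊕ Fin 2 → F) :=
      { toFun := fun y => Sum.elim y (fun c => if c = 0 then w ⬝ᵥ y else x * (w ⬝ᵥ y))
        map_add' := by
          intro y z
          ext (i | i)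
          · simp
          · by_cases h : i = 0 <;> simp [h, dotProduct_add, mul_add]
        map_smul' := by
          intro c y
          ext (i | i)
          · simp
          · by_cases h : i = 0 <;> simp [h, dotProduct_smul, mul_left_comm] }
    have hφ : Function.Injective φ := by
      intro y z h
      ext i
      exact congrFun h (Sum.inl i)
    have hker : LinearMap.ker (completionMatrix F n m A v w x).mulVecLin =
        (LinearMap.ker (A + x • Matrix.vecMulVec v w).mulVecLin).map φ := by
      have hS : ∀ y i, ((A + x • Matrix.vecMulVec v w).mulVec y) i =
          (A.mulVec y) i + v i * (x * (w ⬝ᵥ y)) := by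
        intro y i
        simp [Matrix.add_mulVec, Matrix.smul_mulVec, Matrix.vecMulVec_mulVec]
        ring
      have h1 : ∀ z i, ((completionMatrix F n m A v w x).mulVec z) (Sum.inl i) =
          (A.mulVec (z ∘ Sum.inl)) i + v i * z (Sum.inr 1) := by
        intro z i
        simp [completionMatrix, Matrix.mulVec, dotProduct, Fintype.sum_sum_type]
      have h2 : ∀ z, ((completionMatrix F n m A v w x).mulVec z) (Sum.inr 0) =
          w ⬝ᵥ (z ∘ Sum.inl) - z (Sum.inr 0) := by
        intro z
        simp [completionMatrix, Matrix.mulVec, dotProduct, Fintype.sum_sum_type, sub_eq_add_neg]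
      have h3 : ∀ z, ((completionMatrix F n m A v w x).mulVec z) (Sum.inr 1) =
          x * z (Sum.inr 0) - z (Sum.inr 1) := by
        intro z
        simp [completionMatrix, Matrix.mulVec, dotProduct, Fintype.sum_sum_type, sub_eq_add_neg]
      ext z
      simp only [LinearMap.mem_ker, Submodule.mem_map, Matrix.mulVecLin_apply]
      constructor
      · intro h
        have e2 := h2 z
        have e3 := h3 z
        rw [h, Pi.zero_apply, eq_comm, sub_eq_zero] at e2 e3
        refine ⟨z ∘ Sum.inl, ?_, ?_⟩
        · ext i
          have e1 := h1 z i
          rw [h, Pi.zero_apply] at e1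
          rw [hS, e2, e3, ← e1, Pi.zero_apply, e1]
        · ext (i | i)
          · rfl
          · fin_cases i
            · simp [φ, e2]
            · simp [φ, e2, e3]
      · rintro ⟨y, hy, rfl⟩
        have hc : (φ y) ∘ Sum.inl = y := rfl
        have ha : φ y (Sum.inr 0) = w ⬝ᵥ y := rfl
        have hb : φ y (Sum.inr 1) = x * (w ⬝ᵥ y) := rfl
        ext (i | i)
        · rw [h1, hc, hb, ← hS, hy]; rfl
        · fin_cases i
          · exact (h2 _).trans (by rw [hc, ha, sub_self]; rfl)
          · exact (h3 _).trans (by rw [ha, hb, sub_self]; rfl)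
    have k1 := LinearMap.finrank_range_add_finrank_ker (completionMatrix F n m A v w x).mulVecLin
    have k2 := LinearMap.finrank_range_add_finrank_ker
      (A + x • Matrix.vecMulVec v w).mulVecLin
    have k3 := (Submodule.equivMapOfInjective φ hφ
      (LinearMap.ker (A + x • Matrix.vecMulVec v w).mulVecLin)).finrank_eq
    rw [hker, ← k3] at k1
    simp only [Module.finrank_fintype_fun_eq_card, Fintype.card_sum, Fintype.card_fin] at k1 k2
    unfold Matrix.rank
    omega
  · rintro x' (i | i) (j | j) h
    · rfl
    · rfl
    · rfl
    · fin_cases i <;> fin_cases j <;> simp_all [completionMatrix]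
end

section
/- Let F be a field, let A be an n×m matrix over F, and let B_1,…,B_s ∈ Mat_{n,m}(F) be rank-1 matrices, B_k = v_k w_kᵀ with v_k ∈ F^n, w_k ∈ F^m, which are linearly independent in Mat_{n,m}(F). Let T : Fin n → Fin m → Fin (s+1) → F be the order-3 tensor with slices T(·,·,k) = B_k for k = 1,…,s and T(·,·,s+1) = A, i.e. T = A⊗e_{s+1} + Σ_{k=1}^s v_k⊗w_k⊗e_k. Suppose T = Σ_{j=1}^l a_j⊗b_j⊗c_j is any decomposition of T into l pure tensors (a_j ∈ F^n, b_j ∈ F^m, c_j ∈ F^{s+1}). Then the vectors c_1,…,c_l together with the standard basis vector e_{s+1} span F^{s+1}. -/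
/-- Let `B_k = v_k w_kᵀ` (for `k = 1, …, s`) be rank-one matrices that are
linearly independent in `Mat_{n,m}(F)`, let `A` be an `n × m` matrix, and let
`T = A ⊗ e_{s+1} + ∑_k v_k ⊗ w_k ⊗ e_k` be the order-3 tensor whose `k`-th slice is `B_k`
for `k ≤ s` and whose last slice is `A`.  If `T = ∑_{j=1}^l a_j ⊗ b_j ⊗ c_j` is any
decomposition of `T` into `l` pure tensors, then the vectors `c_1, …, c_l` together with
the standard basis vector `e_{s+1}` span `F^{s+1}`. -/
theorem span_insert_last_single_range_eq_top_of_tensor_decomposition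
    (F : Type*) [Field F] (n m s l : ℕ)
    (A : Matrix (Fin n) (Fin m) F) (v : Fin s → Fin n → F) (w : Fin s → Fin m → F)
    (hli : LinearIndependent F (fun k : Fin s => Matrix.vecMulVec (v k) (w k)))
    (a : Fin l → Fin n → F) (b : Fin l → Fin m → F) (c : Fin l → Fin (s + 1) → F)
    (hT : ∀ (i : Fin n) (j : Fin m) (k : Fin (s + 1)),
      (Fin.lastCases (A i j) (fun t : Fin s => v t i * w t j) k : F) =
        ∑ u : Fin l, a u i * b u j * c u k) :
    Submodule.span F (insert (Pi.single (Fin.last s) (1 : F)) (Set.range c)) = ⊤ := by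
  by_contra hne
  obtain ⟨f, hf0, hf⟩ := Submodule.exists_le_ker_of_lt_top _ (lt_top_iff_ne_top.mpr hne)
  have hlast : f (Pi.single (Fin.last s) 1) = 0 :=
    hf (Submodule.subset_span (Set.mem_insert _ _))
  have hc : ∀ u, f (c u) = 0 := fun u =>
    hf (Submodule.subset_span (Set.mem_insert_of_mem _ ⟨u, rfl⟩))
  have hexp : ∀ x : Fin (s + 1) → F, f x = ∑ k, x k * f (Pi.single k 1) := by
    intro x
    conv_lhs => rw [pi_eq_sum_univ' x]
    simp [map_sum, Pi.single_apply, funext_iff, eq_comm, ← Pi.single_apply]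
    try rfl
  have hz : ∀ t : Fin s, f (Pi.single t.castSucc 1) = 0 := by
    refine Fintype.linearIndependent_iff.mp hli (fun t => f (Pi.single t.castSucc 1)) ?_
    ext i j
    have h1 : ∑ k, (Fin.lastCases (A i j) (fun t : Fin s => v t i * w t j) k : F)
        * f (Pi.single k 1) = 0 := by
      simp_rw [hT i j, Finset.sum_mul]
      rw [Finset.sum_comm]
      refine Finset.sum_eq_zero fun u _ => ?_
      simp_rw [mul_assoc (a u i * b u j)]
      rw [← Finset.mul_sum, ← hexp, hc, mul_zero]
    rw [Fin.sum_univ_castSucc, hlast] at h1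
    simp only [Fin.lastCases_castSucc, mul_zero, add_zero] at h1
    rw [Matrix.sum_apply]
    simpa [Matrix.vecMulVec_apply, mul_comm] using h1
  apply hf0
  ext x
  refine Fin.lastCases ?_ (fun t => ?_) x
  · simpa using hlast
  · simpa using hz t
end

section
/- Let F be a field, let A be an n×m matrix over F, and let B_1,…,B_s ∈ Mat_{n,m}(F) be rank-1 matrices, B_k = v_k w_kᵀ with v_k ∈ F^n, w_k ∈ F^m, which are linearly independent in Mat_{n,m}(F). Let T : Fin n → Fin m → Fin (s+1) → F be the order-3 tensor with slices T(·,·,k) = B_k for k = 1,…,s and T(·,·,s+1) = A. Then for every (x_1,…,x_s) ∈ F^s, the tensor rank of T is at most rank(A + x_1 B_1 + ⋯ + x_s B_s) + s. -/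
/-- The tensor rank of an order-3 tensor `T : Fin n → Fin m → Fin p → F`: the least `l`
such that `T` is a sum of `l` pure tensors. -/
noncomputable def tensorRank3 (F : Type*) [Field F] (n m p : ℕ)
    (T : Fin n → Fin m → Fin p → F) : ℕ :=
  sInf {l : ℕ | ∃ (a : Fin l → Fin n → F) (b : Fin l → Fin m → F) (c : Fin l → Fin p → F),
    ∀ i j k, T i j k = ∑ u : Fin l, a u i * b u j * c u k}

theorem rank_fact_aux (F : Type*) [Field F] (n m : ℕ) (M : Matrix (Fin n) (Fin m) F) :
    ∃ (a : Fin M.rank → Fin n → F) (b : Fin M.rank → Fin m → F),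
      ∀ i j, M i j = ∑ u, a u i * b u j := by
  let B : Module.Basis (Fin M.rank) F (LinearMap.range M.mulVecLin) :=
    Module.finBasisOfFinrankEq F _ rfl
  let y : Fin m → LinearMap.range M.mulVecLin :=
    fun j => ⟨M.mulVecLin (Pi.single j 1), LinearMap.mem_range_self _ _⟩
  refine ⟨fun u => (B u : Fin n → F), fun u j => B.repr (y j) u, fun i j => ?_⟩
  have h := congrArg (fun z : LinearMap.range M.mulVecLin => (z : Fin n → F) i) (B.sum_repr (y j))
  have h2 : ((y j : Fin n → F)) i = M i j := by simp [y]
  rw [← h2]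
  rw [← h]
  simp only [Submodule.coe_sum, Submodule.coe_smul, Finset.sum_apply, Pi.smul_apply, smul_eq_mul,
    mul_comm]

/-- Let `B_k = v_k w_kᵀ` (for `k = 1, …, s`) be rank-one matrices that are
linearly independent in `Mat_{n,m}(F)`, let `A` be an `n × m` matrix, and let
`T = A ⊗ e_{s+1} + ∑_k v_k ⊗ w_k ⊗ e_k`.  Then for every `(x_1, …, x_s) ∈ F^s` the
tensor rank of `T` is at most `rank (A + x_1 B_1 + ⋯ + x_s B_s) + s`. -/
theorem tensorRank3_le_rank_add
    (F : Type*) [Field F] (n m s : ℕ)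
    (A : Matrix (Fin n) (Fin m) F) (v : Fin s → Fin n → F) (w : Fin s → Fin m → F)
    (hli : LinearIndependent F (fun k : Fin s => Matrix.vecMulVec (v k) (w k)))
    (x : Fin s → F) :
    tensorRank3 F n m (s + 1)
        (fun i j k => Fin.lastCases (A i j) (fun t : Fin s => v t i * w t j) k)
      ≤ (A + ∑ k : Fin s, x k • Matrix.vecMulVec (v k) (w k)).rank + s := by
  obtain ⟨a, b, hab⟩ := rank_fact_aux F n m (A + ∑ k : Fin s, x k • Matrix.vecMulVec (v k) (w k))
  refine Nat.sInf_le ⟨Fin.append a v, Fin.append b w,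
    Fin.append (fun _ => Pi.single (Fin.last s) 1)
      (fun t => Pi.single t.castSucc 1 - Pi.single (Fin.last s) (x t)), fun i j k => ?_⟩
  rw [Fin.sum_univ_add]
  simp only [Fin.append_left, Fin.append_right]
  have h := hab i j
  simp only [Matrix.add_apply, Matrix.sum_apply, Matrix.smul_apply, Matrix.vecMulVec_apply,
    smul_eq_mul] at h
  induction k using Fin.lastCases with
  | last =>
    simp only [Fin.lastCases_last, Pi.single_eq_same, mul_one, ← h, Pi.sub_apply]
    have : ∀ t : Fin s, v t i * w t j * ((Pi.single t.castSucc 1 : Fin (s+1) → F) (Fin.last s) - x t)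
        = - (x t * (v t i * w t j)) := by
      intro t
      rw [Pi.single_eq_of_ne (Fin.castSucc_lt_last t).ne']
      ring
    rw [Finset.sum_congr rfl (fun t _ => this t), Finset.sum_neg_distrib]
    ring
  | cast t =>
    have h0 : ∀ c : F, (Pi.single (Fin.last s) c : Fin (s+1) → F) t.castSucc = 0 :=
      fun c => Pi.single_eq_of_ne (Fin.castSucc_lt_last t).ne _
    simp [h0, Pi.single_apply]
end

section
/- Let F be a field, let A be an n×m matrix over F, and let B_1,…,B_s ∈ Mat_{n,m}(F) be rank-1 matrices, B_k = v_k w_kᵀ with v_k ∈ F^n, w_k ∈ F^m, which are linearly independent in Mat_{n,m}(F). Let T : Fin n → Fin m → Fin (s+1) → F be the order-3 tensor with slices T(·,·,k) = B_k for k = 1,…,s and T(·,·,s+1) = A, and let l be the tensor rank of T. Then the minimum of rank(A + x_1 B_1 + ⋯ + x_s B_s) over all (x_1,…,x_s) ∈ F^s equals l − s. -/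
theorem aux_rank_fact {F : Type*} [Field F] {n m : ℕ} (M : Matrix (Fin n) (Fin m) F) :
    ∃ (a : Fin M.rank → Fin n → F) (b : Fin M.rank → Fin m → F),
      ∀ i j, M i j = ∑ u, a u i * b u j := by
  let B : Module.Basis (Fin M.rank) F (LinearMap.range M.mulVecLin) :=
    Module.finBasisOfFinrankEq F _ rfl
  refine ⟨fun u => (B u : Fin n → F),
    fun u j => B.repr ⟨M.mulVecLin (Pi.single j 1), LinearMap.mem_range_self _ _⟩ u, ?_⟩
  intro i j
  have h := B.sum_repr ⟨M.mulVecLin (Pi.single j 1), LinearMap.mem_range_self _ _⟩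
  have h2 := congrFun (congrArg Subtype.val h) i
  simp only [Matrix.mulVecLin_apply, Matrix.mulVec_single_one] at h2
  have h3 : M.col j i = M i j := rfl
  simp only [Matrix.mulVecLin_apply, Matrix.mulVec_single_one]
  rw [← h3, ← h2]
  simp only [Submodule.coe_sum, Submodule.coe_smul, Finset.sum_apply, Pi.smul_apply, smul_eq_mul]
  exact Finset.sum_congr rfl fun u _ => mul_comm _ _

theorem aux_upper {F : Type*} [Field F] {n m s : ℕ}
    (A : Matrix (Fin n) (Fin m) F) (v : Fin s → Fin n → F) (w : Fin s → Fin m → F)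
    (x : Fin s → F) {d : ℕ}
    (hd : (A + ∑ k : Fin s, x k • Matrix.vecMulVec (v k) (w k)).rank = d) :
    ∃ (a : Fin (d + s) → Fin n → F) (b : Fin (d + s) → Fin m → F)
      (c : Fin (d + s) → Fin (s + 1) → F),
    ∀ i j k, (Fin.lastCases (A i j) (fun t : Fin s => v t i * w t j) k : F)
      = ∑ u, a u i * b u j * c u k := by
  subst hd
  obtain ⟨a, b, hab⟩ := aux_rank_fact (A + ∑ k : Fin s, x k • Matrix.vecMulVec (v k) (w k))
  refine ⟨Fin.append a v, Fin.append b w,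
    Fin.append (fun _ => Pi.single (Fin.last s) 1)
      (fun t => Fin.snoc (Pi.single t 1 : Fin s → F) (- x t)), ?_⟩
  intro i j k
  rw [Fin.sum_univ_add]
  simp only [Fin.append_left, Fin.append_right]
  induction k using Fin.lastCases with
  | last =>
    have h := hab i j
    simp only [Matrix.add_apply, Matrix.sum_apply, Matrix.smul_apply, Matrix.vecMulVec_apply,
      smul_eq_mul] at h
    simp only [Fin.lastCases_last, Pi.single_eq_same, mul_one, Fin.snoc_last]
    rw [← h, add_assoc, ← Finset.sum_add_distrib]
    rw [Finset.sum_eq_zero, add_zero]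
    intro t _
    ring
  | cast t =>
    simp only [Fin.lastCases_castSucc, Fin.snoc_castSucc]
    simp [Pi.single_apply]

theorem aux_lower {F : Type*} [Field F] {n m s l : ℕ}
    (A : Matrix (Fin n) (Fin m) F) (v : Fin s → Fin n → F) (w : Fin s → Fin m → F)
    (hli : LinearIndependent F (fun k : Fin s => Matrix.vecMulVec (v k) (w k)))
    (a : Fin l → Fin n → F) (b : Fin l → Fin m → F) (c : Fin l → Fin (s + 1) → F)
    (h : ∀ i j k, (Fin.lastCases (A i j) (fun t : Fin s => v t i * w t j) k : F)
      = ∑ u, a u i * b u j * c u k) :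
    s ≤ l ∧ ∃ x : Fin s → F,
      (A + ∑ k : Fin s, x k • Matrix.vecMulVec (v k) (w k)).rank ≤ l - s := by
  have hA : ∀ i j, A i j = ∑ u, a u i * b u j * c u (Fin.last s) := fun i j => by
    simpa using h i j (Fin.last s)
  have hB : ∀ i j t, v t i * w t j = ∑ u, a u i * b u j * c u (Fin.castSucc t) :=
    fun i j t => by simpa using h i j (Fin.castSucc t)
  have key : ∀ (x : Fin s → F) i j, ∑ k, x k * (v k i * w k j)
      = ∑ u, a u i * b u j * ∑ k, x k * c u (Fin.castSucc k) := by
    intro x i j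
    simp only [hB, Finset.mul_sum]
    rw [Finset.sum_comm]
    refine Finset.sum_congr rfl fun u _ => Finset.sum_congr rfl fun k _ => by ring
  let C : Matrix (Fin s) (Fin l) F := Matrix.of fun k u => c u (Fin.castSucc k)
  have hC : LinearIndependent F C.row := by
    rw [Fintype.linearIndependent_iff] at hli ⊢
    intro g hg
    apply hli g
    ext i j
    simp only [Matrix.sum_apply, Matrix.smul_apply, Matrix.vecMulVec_apply, smul_eq_mul,
      Matrix.zero_apply]
    rw [key]
    refine Finset.sum_eq_zero fun u _ => ?_
    have := congrFun hg u
    simp only [Finset.sum_apply, Pi.smul_apply, smul_eq_mul, Pi.zero_apply] at this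
    have h3 : ∑ k, g k * c u (Fin.castSucc k) = 0 := this
    rw [h3, mul_zero]
  have hr : C.rank = s := by simpa using hC.rank_matrix
  have hfr : Module.finrank F (Submodule.span F (Set.range C.col)) = s := by
    rw [← Matrix.rank_eq_finrank_span_cols, hr]
  obtain ⟨f, hf, -, hfli⟩ := Submodule.exists_fun_fin_finrank_span_eq F (Set.range C.col)
  choose p hp using hf
  have hpinj : Function.Injective p := by
    intro i j hij
    apply hfli.injective
    rw [← hp i, ← hp j, hij]
  let U : Finset (Fin l) := Finset.univ.image p
  have hU : U.card = s := by
    rw [Finset.card_image_of_injective _ hpinj, Finset.card_univ, Fintype.card_fin, hfr]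
  have hUc : Fintype.card {u // u ∉ U} = l - s := by
    rw [Fintype.card_subtype_compl]; simp [hU]
  refine ⟨by simpa [hU] using Finset.card_le_univ U, ?_⟩
  obtain ⟨φ, hφ⟩ : ∃ φ : (Fin s → F) →ₗ[F] F, ∀ i, φ (f i) = - c (p i) (Fin.last s) := by
    obtain ⟨φ, hφ⟩ := LinearMap.exists_extend
      ((Module.Basis.span hfli).constr F (fun i => - c (p i) (Fin.last s)))
    refine ⟨φ, fun i => ?_⟩
    have h1 := LinearMap.congr_fun hφ (Module.Basis.span hfli i)
    rw [Module.Basis.constr_basis] at h1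
    rw [← h1]
    simp [Module.Basis.span_apply]
  let x : Fin s → F := fun k => φ (Pi.single k 1)
  have hx : ∀ y : Fin s → F, φ y = ∑ k, x k * y k := by
    intro y
    rw [LinearMap.pi_apply_eq_sum_univ φ y]
    refine Finset.sum_congr rfl fun k _ => ?_
    rw [smul_eq_mul, mul_comm]
    congr 2
    ext j
    simp [Pi.single_apply, eq_comm]
  refine ⟨x, ?_⟩
  let e : Fin l → F := fun u => c u (Fin.last s) + ∑ k, x k * c u (Fin.castSucc k)
  have he : ∀ u ∈ U, e u = 0 := by
    intro u hu
    obtain ⟨i, -, rfl⟩ := Finset.mem_image.1 hu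
    have h1 := hφ i
    rw [← hp i, hx] at h1
    have h2 : ∑ k, x k * c (p i) (Fin.castSucc k) = - c (p i) (Fin.last s) := h1
    simp only [e, h2, add_neg_cancel]
  have hM : A + ∑ k : Fin s, x k • Matrix.vecMulVec (v k) (w k)
      = (Matrix.of fun i (u : {u // u ∉ U}) => a u i) *
        (Matrix.of fun (u : {u // u ∉ U}) j => b u j * e u) := by
    ext i j
    simp only [Matrix.add_apply, Matrix.sum_apply, Matrix.smul_apply, Matrix.vecMulVec_apply,
      smul_eq_mul, Matrix.mul_apply, Matrix.of_apply]
    rw [key, hA, ← Finset.sum_add_distrib]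
    have h1 : ∑ u : {u // u ∉ U}, a u i * (b u j * e u) = ∑ u, a u i * (b u j * e u) := by
      rw [← Finset.sum_subtype (Finset.univ.filter (· ∉ U)) (by simp)
        (fun u => a u i * (b u j * e u))]
      refine Finset.sum_subset (Finset.subset_univ _) fun u _ hu => ?_
      have : u ∈ U := by simpa using hu
      rw [he u this]; ring
    rw [h1]
    exact Finset.sum_congr rfl fun u _ => by simp only [e]; ring
  rw [hM, ← hUc]
  exact (Matrix.rank_mul_le_left _ _).trans (Matrix.rank_le_card_width _)

/-- Let `B_k = v_k w_kᵀ` (for `k = 1, …, s`) be rank-one matrices that are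
linearly independent in `Mat_{n,m}(F)`, let `A` be an `n × m` matrix, let
`T = A ⊗ e_{s+1} + ∑_k v_k ⊗ w_k ⊗ e_k`, and let `l` be the tensor rank of `T`.  Then the
minimum of `rank (A + x_1 B_1 + ⋯ + x_s B_s)` over all `(x_1, …, x_s) ∈ F^s` is `l - s`. -/
theorem sInf_rank_eq_tensorRank3_sub
    (F : Type*) [Field F] (n m s : ℕ)
    (A : Matrix (Fin n) (Fin m) F) (v : Fin s → Fin n → F) (w : Fin s → Fin m → F)
    (hli : LinearIndependent F (fun k : Fin s => Matrix.vecMulVec (v k) (w k)))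
    (l : ℕ)
    (hl : tensorRank3 F n m (s + 1)
        (fun i j k => Fin.lastCases (A i j) (fun t : Fin s => v t i * w t j) k) = l) :
    sInf {d : ℕ | ∃ x : Fin s → F,
        (A + ∑ k : Fin s, x k • Matrix.vecMulVec (v k) (w k)).rank = d} = l - s := by
  have hmem := fun (x : Fin s → F) => aux_upper A v w x rfl
  let S : Set ℕ := {l : ℕ | ∃ (a : Fin l → Fin n → F) (b : Fin l → Fin m → F)
    (c : Fin l → Fin (s + 1) → F), ∀ i j k,
      (Fin.lastCases (A i j) (fun t : Fin s => v t i * w t j) k : F)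
        = ∑ u : Fin l, a u i * b u j * c u k}
  change sInf S = l at hl
  have hl1 := Nat.sInf_mem (s := S) ⟨_, hmem 0⟩
  rw [hl] at hl1
  obtain ⟨a, b, c, h⟩ := hl1
  obtain ⟨hsl, x, hx⟩ := aux_lower A v w hli a b c h
  apply le_antisymm
  · refine le_trans (Nat.sInf_le ?_) hx
    exact ⟨x, rfl⟩
  · refine le_csInf ⟨_, x, rfl⟩ ?_
    rintro d ⟨y, rfl⟩
    have := Nat.sInf_le (s := S) (hmem y)
    rw [hl] at this
    omega
end

section
/- Let F be a field, let S ∈ Mat_{p,q}(F), let a_1,…,a_k ∈ F^p, b_1,…,b_k ∈ F^q and λ_1,…,λ_k ∈ F. Let A be the p×k matrix with columns a_1,…,a_k, let B be the q×k matrix with columns b_1,…,b_k, and let Λ = diag(λ_1,…,λ_k). Let C be the (p+2k)×(q+2k) block matrix ( S , A , 0 ; 0 , I_k , −Λ ; Bᵀ , 0 , I_k ). Then rank C = 2k + rank( S − Σ_{j=1}^k λ_j a_j b_jᵀ ). -/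
def prodSubEquivAux {F V W : Type*} [Field F] [AddCommGroup V] [AddCommGroup W] [Module F V]
    [Module F W] (P : Submodule F V) (Q : Submodule F W) : (P.prod Q) ≃ₗ[F] P × Q where
  toFun x := (⟨x.1.1, x.2.1⟩, ⟨x.1.2, x.2.2⟩)
  invFun y := ⟨(y.1.1, y.2.1), ⟨y.1.2, y.2.2⟩⟩
  map_add' _ _ := rfl
  map_smul' _ _ := rfl
  left_inv _ := rfl
  right_inv _ := rfl

open Matrix in
lemma rank_blockDiag_aux {F l m n o : Type*} [Field F] [Fintype l] [Fintype m] [Fintype n] [Fintype o]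
    (X : Matrix l m F) (Y : Matrix n o F) :
    (Matrix.fromBlocks X 0 0 Y).rank = X.rank + Y.rank := by
  let e1 := LinearEquiv.sumArrowLequivProdArrow m o F F
  let e2 := LinearEquiv.sumArrowLequivProdArrow l n F F
  have h : (Matrix.fromBlocks X 0 0 Y).mulVecLin
      = e2.symm.toLinearMap ∘ₗ (X.mulVecLin.prodMap Y.mulVecLin) ∘ₗ e1.toLinearMap := by
    apply LinearMap.ext
    intro v
    funext i
    rcases i with i | i <;>
      simp [e1, e2, Matrix.mulVec, dotProduct, LinearEquiv.sumArrowLequivProdArrow,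
        Equiv.sumArrowEquivProdArrow]
  unfold Matrix.rank
  rw [h, LinearMap.range_comp, LinearEquiv.finrank_map_eq, LinearMap.range_comp,
    LinearEquiv.range, Submodule.map_top, LinearMap.range_prodMap,
    (prodSubEquivAux _ _).finrank_eq, Module.finrank_prod]


/-- Let `S ∈ Mat_{p,q}(F)`, `a_1, …, a_k ∈ F^p`, `b_1, …, b_k ∈ F^q` and
`λ_1, …, λ_k ∈ F`.  Let `A` have columns `a_1, …, a_k`, let `B` have columns `b_1, …, b_k`,
let `Λ = diag(λ_1, …, λ_k)`, and let `C` be the block matrix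
`( S , A , 0 ; 0 , I_k , -Λ ; Bᵀ , 0 , I_k )`.  Then
`rank C = 2k + rank (S - ∑_j λ_j a_j b_jᵀ)`. -/
theorem rank_blockMatrix_eq_two_mul_add_rank
    (F : Type*) [Field F] (p q k : ℕ) (S : Matrix (Fin p) (Fin q) F)
    (a : Fin k → Fin p → F) (b : Fin k → Fin q → F) (lam : Fin k → F) :
    (Matrix.fromBlocks S
        (Matrix.of fun i (j : Fin k ⊕ Fin k) => Sum.elim (fun j' => a j' i) (fun _ => (0 : F)) j)
        (Matrix.of fun (i : Fin k ⊕ Fin k) j => Sum.elim (fun _ => (0 : F)) (fun i' => b i' j) i)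
        (Matrix.fromBlocks 1 (-(Matrix.diagonal lam)) 0 1)).rank
      = 2 * k + (S - ∑ j : Fin k, lam j • Matrix.vecMulVec (a j) (b j)).rank := by
  set P : Matrix (Fin p) (Fin k ⊕ Fin k) F := Matrix.of fun i (j : Fin k ⊕ Fin k) =>
    Sum.elim (fun j' => a j' i) (fun _ => (0 : F)) j with hP
  set Q : Matrix (Fin k ⊕ Fin k) (Fin q) F := Matrix.of fun (i : Fin k ⊕ Fin k) j =>
    Sum.elim (fun _ => (0 : F)) (fun i' => b i' j) i with hQ
  set D : Matrix (Fin k ⊕ Fin k) (Fin k ⊕ Fin k) F :=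
    Matrix.fromBlocks 1 (-(Matrix.diagonal lam)) 0 1 with hD
  have hdet : D.det = 1 := by simp [hD]
  let E : Matrix (Fin k ⊕ Fin k) (Fin k ⊕ Fin k) F :=
    Matrix.fromBlocks 1 (Matrix.diagonal lam) 0 1
  have hED : E * D = 1 := by
    simp [E, hD, Matrix.fromBlocks_multiply]
  have hDE : D * E = 1 := by
    simp [E, hD, Matrix.fromBlocks_multiply]
  let _ : Invertible D := ⟨E, hED, hDE⟩
  have hinv : ⅟D = E := rfl
  have hS : S - P * ⅟D * Q = S - ∑ j : Fin k, lam j • Matrix.vecMulVec (a j) (b j) := by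
    rw [hinv]
    congr 1
    ext i j
    simp [Matrix.mul_apply, Matrix.sum_apply, hP, hQ, E, Matrix.vecMulVec_apply,
      Matrix.diagonal_apply]
    refine Finset.sum_congr rfl fun x _ => ?_
    ring
  rw [Matrix.fromBlocks_eq_of_invertible₂₂ S P Q D, Matrix.rank_mul_eq_left_of_isUnit_det,
    Matrix.rank_mul_eq_right_of_isUnit_det, rank_blockDiag_aux, hS,
    Matrix.rank_of_isUnit D ((Matrix.isUnit_iff_isUnit_det D).2 (by simp [hdet]))]
  · simp; ring
  · simp
  · simp
end
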